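/- arXiv:2401.15728 — 2 statements merged into one kernel-verified Lean document; each statement's English description precedes it below -/
import Mathlib

section
/- Fix t < v with the covariance matrix Σ(t,v) positive definite, assume γ(u) > 0 for u ∈ [t,v], and let y, z ∈ ℝ. Then for every bounded continuous function f : ℝ → ℝ depending only on the first forward variable, the integral of f against the first-order Green's function vanishes: ∫∫_{ℝ²} f(η) · G₁(y,z,t; η,ζ,v) dη dζ = 0. (This is the statement that the contribution V^{(1,0)} to the two-stage futures valuation vanishes.) -/
open MeasureTheory Real

/-- Mean reversion factor `φ_r(t,v) = exp(−∫_t^v α)`. -/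
noncomputable def phiR (α : ℝ → ℝ) (t v : ℝ) : ℝ := Real.exp (-(∫ u in t..v, α u))

/-- Variance of the short-rate factor `Σ_rr(t,v)`. -/
noncomputable def Srr (α σ : ℝ → ℝ) (t v : ℝ) : ℝ := ∫ u in t..v, (phiR α u v) ^ 2 * (σ u) ^ 2

/-- Smile dispersion factor `ψ_r(t,v)`. -/
noncomputable def psiR (α σ γ : ℝ → ℝ) (t v : ℝ) : ℝ :=
  Real.exp ((1 / 2) * (γ v) ^ 2 * Srr α σ t v)

/-- Rate–integral covariance `Σ_rz(t,v)`. -/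
noncomputable def Srz (α σ γ : ℝ → ℝ) (t v : ℝ) : ℝ :=
  ∫ u in t..v, psiR α σ γ t u * phiR α u v * Srr α σ t u

/-- Variance of the compounding variable `Σ_zz(t,v)`. -/
noncomputable def Szz (α σ γ : ℝ → ℝ) (t v : ℝ) : ℝ :=
  2 * ∫ u in t..v, psiR α σ γ t u * Srz α σ γ t u

/-- `B*(t,v) = ∫_t^v ψ_r(t,u) φ_r(t,u) du`. -/
noncomputable def Bstar (α σ γ : ℝ → ℝ) (t v : ℝ) : ℝ :=
  ∫ u in t..v, psiR α σ γ t u * phiR α t u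

/-- Drift of the compounding variable `μ*(y,t,v)`. -/
noncomputable def muStar (α σ γ : ℝ → ℝ) (y t v : ℝ) : ℝ :=
  Bstar α σ γ t v * (y + Srz α σ γ 0 t) + (1 / 2) * (Bstar α σ γ t v) ^ 2 * Srr α σ 0 t

/-- One-dimensional Gaussian density with mean `m` and variance `s`. -/
noncomputable def gauss (x m s : ℝ) : ℝ :=
  (Real.sqrt (2 * Real.pi * s))⁻¹ * Real.exp (-(x - m) ^ 2 / (2 * s))

/-- Centered bivariate Gaussian density with covariance `!![srr, srz; srz, szz]` at `(a, b)`. -/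
noncomputable def gauss2 (a b srr srz szz : ℝ) : ℝ :=
  (2 * Real.pi * Real.sqrt (srr * szz - srz ^ 2))⁻¹ *
    Real.exp (-(szz * a ^ 2 - 2 * srz * a * b + srr * b ^ 2) / (2 * (srr * szz - srz ^ 2)))

/-- The leading-order (Hull–White) Green's function `G₀`. -/
noncomputable def G0 (α σ γ : ℝ → ℝ) (y z t η ζ v : ℝ) : ℝ :=
  gauss2 (η - phiR α t v * y) (ζ - z - muStar α σ γ y t v)
    (Srr α σ t v) (Srz α σ γ t v) (Szz α σ γ t v)


/-- The smile factor `R⁺(y,t,u)`. -/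
noncomputable def Rplus (α σ γ ystar : ℝ → ℝ) (y t u : ℝ) : ℝ :=
  Real.exp ((1 / 2) * (γ u) ^ 2 * Srr α σ t u + γ u * (phiR α t u * y + ystar u)) / (2 * γ u)

/-- The smile factor `R⁻(y,t,u)`. -/
noncomputable def Rminus (α σ γ ystar : ℝ → ℝ) (y t u : ℝ) : ℝ :=
  Real.exp ((1 / 2) * (γ u) ^ 2 * Srr α σ t u - γ u * (phiR α t u * y + ystar u)) / (2 * γ u)

/-- The argument shift `Δy(t,u)`. -/
noncomputable def dY (α σ γ : ℝ → ℝ) (t u : ℝ) : ℝ := γ u * Srr α σ t u / phiR α t u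

/-- The argument shift `Δz(t,u)`. -/
noncomputable def dZ (α σ γ : ℝ → ℝ) (t u : ℝ) : ℝ :=
  γ u * Srz α σ γ t u - Bstar α σ γ t u * dY α σ γ t u

/-- `∂_z G₀` in the backward variable `z`. -/
noncomputable def dzG0 (α σ γ : ℝ → ℝ) (y z t η ζ v : ℝ) : ℝ :=
  deriv (fun z' => G0 α σ γ y z' t η ζ v) z

/-- `∂_y ∂_z G₀` in the backward variables. -/
noncomputable def dydzG0 (α σ γ : ℝ → ℝ) (y z t η ζ v : ℝ) : ℝ :=
  deriv (fun y' => dzG0 α σ γ y' z t η ζ v) y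

/-- `∂_z² G₀` in the backward variable `z`. -/
noncomputable def dzzG0 (α σ γ : ℝ → ℝ) (y z t η ζ v : ℝ) : ℝ :=
  deriv (fun z' => dzG0 α σ γ y z' t η ζ v) z

/-- The first-order Green's function correction `G₁`. -/
noncomputable def G1 (α σ γ ystar R1star : ℝ → ℝ) (y z t η ζ v : ℝ) : ℝ :=
  (∫ t₁ in t..v,
      (Rplus α σ γ ystar y t t₁ *
          dzG0 α σ γ (y + dY α σ γ t t₁) (z + dZ α σ γ t t₁) t η ζ v
        - Rminus α σ γ ystar y t t₁ *
            dzG0 α σ γ (y - dY α σ γ t t₁) (z - dZ α σ γ t t₁) t η ζ v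
        + R1star t₁ * dzG0 α σ γ y z t η ζ v))
    - muStar α σ γ y t v * dzG0 α σ γ y z t η ζ v
    - (Srz α σ γ t v / phiR α t v) *
        (dydzG0 α σ γ y z t η ζ v - Bstar α σ γ t v * dzzG0 α σ γ y z t η ζ v)
    - Szz α σ γ t v * dzzG0 α σ γ y z t η ζ v


open Set

theorem integrable_one_sub_mul_exp_neg_mul_sq {p : ℝ} (hp : 0 < p) :
    Integrable (fun x : ℝ => (1 - 2 * p * x ^ 2) * exp (-p * x ^ 2)) := by
  have h2 := integrable_rpow_mul_exp_neg_mul_sq hp (s := 2) (by norm_num)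
  refine ((integrable_exp_neg_mul_sq hp).sub (h2.const_mul (2 * p))).congr
    (ae_of_all _ fun x => ?_)
  simp only [Pi.sub_apply, rpow_two]
  ring

theorem hasDerivAt_exp_neg_mul_sq (p x : ℝ) :
    HasDerivAt (fun x : ℝ => exp (-p * x ^ 2)) (-(2 * p) * (x * exp (-p * x ^ 2))) x := by
  have h := (((hasDerivAt_id x).pow 2).const_mul (-p)).exp
  simp only [id, Pi.pow_apply] at h
  exact h.congr_deriv (by push_cast; ring)

theorem hasDerivAt_id_mul_exp_neg_mul_sq (p x : ℝ) :
    HasDerivAt (fun x : ℝ => x * exp (-p * x ^ 2))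
      ((1 - 2 * p * x ^ 2) * exp (-p * x ^ 2)) x := by
  exact ((hasDerivAt_id x).mul (hasDerivAt_exp_neg_mul_sq p x)).congr_deriv
    (by simp only [id]; ring)

theorem integral_id_mul_exp_neg_mul_sq {p : ℝ} (hp : 0 < p) :
    ∫ x : ℝ, x * exp (-p * x ^ 2) = 0 := by
  have h := integral_eq_zero_of_hasDerivAt_of_integrable (hasDerivAt_exp_neg_mul_sq p)
    ((integrable_mul_exp_neg_mul_sq hp).const_mul _) (integrable_exp_neg_mul_sq hp)
  rw [integral_const_mul] at h
  exact (mul_eq_zero.1 h).resolve_left (by linarith)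

theorem integral_one_sub_mul_exp_neg_mul_sq {p : ℝ} (hp : 0 < p) :
    ∫ x : ℝ, (1 - 2 * p * x ^ 2) * exp (-p * x ^ 2) = 0 :=
  integral_eq_zero_of_hasDerivAt_of_integrable (hasDerivAt_id_mul_exp_neg_mul_sq p)
    (integrable_one_sub_mul_exp_neg_mul_sq hp) (integrable_mul_exp_neg_mul_sq hp)

/-- A real function that is integrable over the line with zero integral. -/
def IntegratesToZero (g : ℝ → ℝ) : Prop := Integrable g ∧ ∫ x, g x = 0

namespace IntegratesToZero

variable {g h : ℝ → ℝ}

theorem const_mul (hg : IntegratesToZero g) (c : ℝ) : IntegratesToZero fun x => c * g x :=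
  ⟨hg.1.const_mul c, by rw [integral_const_mul, hg.2, mul_zero]⟩

theorem add (hg : IntegratesToZero g) (hh : IntegratesToZero h) :
    IntegratesToZero fun x => g x + h x :=
  ⟨hg.1.add hh.1, by rw [integral_add hg.1 hh.1, hg.2, hh.2, add_zero]⟩

theorem sub (hg : IntegratesToZero g) (hh : IntegratesToZero h) :
    IntegratesToZero fun x => g x - h x :=
  ⟨hg.1.sub hh.1, by rw [integral_sub hg.1 hh.1, hg.2, hh.2, sub_zero]⟩

theorem comp_sub_right (hg : IntegratesToZero g) (c : ℝ) : IntegratesToZero fun x => g (x - c) :=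
  ⟨hg.1.comp_sub_right c, by rw [integral_sub_right_eq_self, hg.2]⟩

/-- Superposing weighted translates of `g` over a compact interval keeps the integral zero. -/
theorem superpose (hg : IntegratesToZero g) (hgc : Continuous g) {A m : ℝ → ℝ} {t v : ℝ}
    (htv : t ≤ v) (hA : ContinuousOn A (Icc t v)) (hm : ContinuousOn m (Icc t v)) :
    IntegratesToZero fun x => ∫ u in t..v, A u * g (x - m u) := by
  have hAi : Integrable A (volume.restrict (Ioc t v)) :=
    (hA.integrableOn_compact isCompact_Icc).mono_set Ioc_subset_Icc_self
  have hmm : AEStronglyMeasurable m (volume.restrict (Ioc t v)) :=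
    (hm.mono Ioc_subset_Icc_self).aestronglyMeasurable measurableSet_Ioc
  have hF : Integrable (fun q : ℝ × ℝ => A q.1 * g (q.2 - m q.1))
      ((volume.restrict (Ioc t v)).prod volume) := by
    refine (integrable_prod_iff ?_).2 ⟨ae_of_all _ fun u => ?_, ?_⟩
    · exact hAi.1.comp_fst.mul (hgc.comp_aestronglyMeasurable
        (measurable_snd.aestronglyMeasurable.sub hmm.comp_fst))
    · exact (hg.1.comp_sub_right (m u)).const_mul (A u)
    · refine (hAi.norm.mul_const (∫ x, ‖g x‖)).congr (ae_of_all _ fun u => ?_)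
      simp only [norm_mul]
      rw [integral_const_mul, integral_sub_right_eq_self (fun x => ‖g x‖)]
  simp only [IntegratesToZero, intervalIntegral.integral_of_le htv]
  refine ⟨hF.integral_prod_right, ?_⟩
  rw [← integral_integral_swap (f := fun u x => A u * g (x - m u)) hF]
  simp [integral_const_mul, integral_sub_right_eq_self, hg.2]

end IntegratesToZero

section Continuity

variable {α σ γ : ℝ → ℝ}

theorem continuous_uncurry_phiR (hα : Continuous α) :
    Continuous fun q : ℝ × ℝ => phiR α q.1 q.2 := by
  have hI : ∀ a b, IntervalIntegrable α volume a b := fun a b => hα.intervalIntegrable a b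
  have h0 : Continuous fun b => ∫ u in (0 : ℝ)..b, α u :=
    intervalIntegral.continuous_primitive hI 0
  have : (fun q : ℝ × ℝ => phiR α q.1 q.2) =
      fun q => exp (-((∫ u in (0 : ℝ)..q.2, α u) - ∫ u in (0 : ℝ)..q.1, α u)) := by
    funext q
    rw [phiR, intervalIntegral.integral_interval_sub_left (hI _ _) (hI _ _)]
  rw [this]
  fun_prop

theorem continuous_phiR (hα : Continuous α) (t : ℝ) : Continuous (phiR α t) :=
  (continuous_uncurry_phiR hα).comp (Continuous.prodMk_right t)

theorem continuous_Srr (hα : Continuous α) (hσ : Continuous σ) (t : ℝ) :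
    Continuous (Srr α σ t) := by
  have hφ := continuous_uncurry_phiR hα
  refine intervalIntegral.continuous_parametric_intervalIntegral_of_continuous
    (f := fun v u => phiR α u v ^ 2 * σ u ^ 2) ?_ continuous_id
  have : Continuous fun q : ℝ × ℝ => phiR α q.2 q.1 := hφ.comp continuous_swap
  simp only [Function.uncurry_def]
  fun_prop

theorem continuous_psiR (hα : Continuous α) (hσ : Continuous σ) (hγ : Continuous γ) (t : ℝ) :
    Continuous (psiR α σ γ t) := by
  have := continuous_Srr hα hσ t
  unfold psiR
  fun_prop

theorem continuous_Srz (hα : Continuous α) (hσ : Continuous σ) (hγ : Continuous γ) (t : ℝ) :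
    Continuous (Srz α σ γ t) := by
  have hφ := continuous_uncurry_phiR hα
  have hS := continuous_Srr hα hσ t
  have hψ := continuous_psiR hα hσ hγ t
  refine intervalIntegral.continuous_parametric_intervalIntegral_of_continuous
    (f := fun v u => psiR α σ γ t u * phiR α u v * Srr α σ t u) ?_ continuous_id
  have : Continuous fun q : ℝ × ℝ => phiR α q.2 q.1 := hφ.comp continuous_swap
  simp only [Function.uncurry_def]
  fun_prop

theorem continuous_Bstar (hα : Continuous α) (hσ : Continuous σ) (hγ : Continuous γ) (t : ℝ) :
    Continuous (Bstar α σ γ t) := by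
  have hφ := continuous_phiR hα t
  have hψ := continuous_psiR hα hσ hγ t
  exact intervalIntegral.continuous_primitive
    (fun a b => (hψ.mul hφ).intervalIntegrable a b) t

theorem continuous_dY (hα : Continuous α) (hσ : Continuous σ) (hγ : Continuous γ) (t : ℝ) :
    Continuous (dY α σ γ t) :=
  (hγ.mul (continuous_Srr hα hσ t)).div (continuous_phiR hα t) fun _ => (exp_pos _).ne'

theorem continuous_dZ (hα : Continuous α) (hσ : Continuous σ) (hγ : Continuous γ) (t : ℝ) :
    Continuous (dZ α σ γ t) :=
  (hγ.mul (continuous_Srz hα hσ hγ t)).sub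
    ((continuous_Bstar hα hσ hγ t).mul (continuous_dY hα hσ hγ t))

end Continuity

/-- Conditioning a bivariate Gaussian density on its first coordinate. -/
theorem gauss2_eq_mul_exp {a b srr srz szz : ℝ} (hs : srr ≠ 0) (hD : srr * szz - srz ^ 2 ≠ 0) :
    gauss2 a b srr srz szz =
      (2 * π * √(srr * szz - srz ^ 2))⁻¹ * exp (-a ^ 2 / (2 * srr)) *
        exp (-(srr / (2 * (srr * szz - srz ^ 2))) * (b - srz / srr * a) ^ 2) := by
  rw [gauss2, mul_assoc (_⁻¹), ← exp_add]
  congr 2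
  generalize hE : srr * szz - srz ^ 2 = D at hD
  obtain rfl : szz = (D + srz ^ 2) / srr := by
    rw [eq_div_iff hs, ← hE]
    ring
  field_simp
  ring

section Kernel

variable {α σ γ : ℝ → ℝ} {t v : ℝ}

/-- Precision parameter of the second forward variable conditional on the first. -/
noncomputable def condPrec (α σ γ : ℝ → ℝ) (t v : ℝ) : ℝ :=
  Srr α σ t v / (2 * (Srr α σ t v * Szz α σ γ t v - Srz α σ γ t v ^ 2))

/-- Marginal density of `G₀` in the first forward variable, up to normalization, times the
factor `2 * condPrec` produced by `∂_z`. -/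
noncomputable def condAmp (α σ γ : ℝ → ℝ) (t v η y : ℝ) : ℝ :=
  (2 * π * √(Srr α σ t v * Szz α σ γ t v - Srz α σ γ t v ^ 2))⁻¹ *
    exp (-(η - phiR α t v * y) ^ 2 / (2 * Srr α σ t v)) * (2 * condPrec α σ γ t v)

/-- Conditional mean shift of the second forward variable given the first. -/
noncomputable def condShift (α σ γ : ℝ → ℝ) (t v η y : ℝ) : ℝ :=
  muStar α σ γ y t v + Srz α σ γ t v / Srr α σ t v * (η - phiR α t v * y)

theorem differentiable_condAmp (η : ℝ) : Differentiable ℝ (condAmp α σ γ t v η) := by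
  unfold condAmp
  fun_prop

theorem differentiable_condShift (η : ℝ) : Differentiable ℝ (condShift α σ γ t v η) := by
  unfold condShift muStar
  fun_prop

theorem dzG0_eq (hs : Srr α σ t v ≠ 0)
    (hD : Srr α σ t v * Szz α σ γ t v - Srz α σ γ t v ^ 2 ≠ 0) (y z η ζ : ℝ) :
    dzG0 α σ γ y z t η ζ v = condAmp α σ γ t v η y *
      ((ζ - (z + condShift α σ γ t v η y)) *
        exp (-condPrec α σ γ t v * (ζ - (z + condShift α σ γ t v η y)) ^ 2)) := by
  have hG : (fun z' => G0 α σ γ y z' t η ζ v) = fun z' =>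
      (2 * π * √(Srr α σ t v * Szz α σ γ t v - Srz α σ γ t v ^ 2))⁻¹ *
        exp (-(η - phiR α t v * y) ^ 2 / (2 * Srr α σ t v)) *
        exp (-condPrec α σ γ t v * (ζ - (z' + condShift α σ γ t v η y)) ^ 2) := by
    funext z'
    rw [G0, gauss2_eq_mul_exp hs hD, condPrec, condShift]
    ring_nf
  have hin : HasDerivAt (fun z' => ζ - (z' + condShift α σ γ t v η y)) (-1) z :=
    ((hasDerivAt_id z).add_const _).const_sub ζ
  have hd := ((hasDerivAt_exp_neg_mul_sq (condPrec α σ γ t v) _).comp z hin).const_mul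
    ((2 * π * √(Srr α σ t v * Szz α σ γ t v - Srz α σ γ t v ^ 2))⁻¹ *
        exp (-(η - phiR α t v * y) ^ 2 / (2 * Srr α σ t v)))
  rw [dzG0, hG]
  refine hd.deriv.trans ?_
  rw [condAmp]
  ring

theorem dzzG0_eq (hs : Srr α σ t v ≠ 0)
    (hD : Srr α σ t v * Szz α σ γ t v - Srz α σ γ t v ^ 2 ≠ 0) (y z η ζ : ℝ) :
    dzzG0 α σ γ y z t η ζ v = -condAmp α σ γ t v η y *
      ((1 - 2 * condPrec α σ γ t v * (ζ - (z + condShift α σ γ t v η y)) ^ 2) *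
        exp (-condPrec α σ γ t v * (ζ - (z + condShift α σ γ t v η y)) ^ 2)) := by
  have hin : HasDerivAt (fun z' => ζ - (z' + condShift α σ γ t v η y)) (-1) z :=
    ((hasDerivAt_id z).add_const _).const_sub ζ
  have hd := ((hasDerivAt_id_mul_exp_neg_mul_sq (condPrec α σ γ t v) _).comp z hin).const_mul
    (condAmp α σ γ t v η y)
  simp only [dzzG0, dzG0_eq hs hD]
  refine hd.deriv.trans ?_
  ring

theorem dydzG0_eq (hs : Srr α σ t v ≠ 0)
    (hD : Srr α σ t v * Szz α σ γ t v - Srz α σ γ t v ^ 2 ≠ 0) (y z η ζ : ℝ) :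
    dydzG0 α σ γ y z t η ζ v =
      deriv (condAmp α σ γ t v η) y *
        ((ζ - (z + condShift α σ γ t v η y)) *
          exp (-condPrec α σ γ t v * (ζ - (z + condShift α σ γ t v η y)) ^ 2)) -
      condAmp α σ γ t v η y * deriv (condShift α σ γ t v η) y *
        ((1 - 2 * condPrec α σ γ t v * (ζ - (z + condShift α σ γ t v η y)) ^ 2) *
          exp (-condPrec α σ γ t v * (ζ - (z + condShift α σ γ t v η y)) ^ 2)) := by
  have hin : HasDerivAt (fun y' => ζ - (z + condShift α σ γ t v η y'))
      (-deriv (condShift α σ γ t v η) y) y :=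
    ((differentiable_condShift η y).hasDerivAt.const_add z).const_sub ζ
  have hd := (differentiable_condAmp (α := α) (σ := σ) (γ := γ) (t := t) (v := v) η
    y).hasDerivAt.mul
    ((hasDerivAt_id_mul_exp_neg_mul_sq (condPrec α σ γ t v) _).comp y hin)
  simp only [dydzG0, dzG0_eq hs hD]
  refine hd.deriv.trans ?_
  simp only [Function.comp_apply]
  ring

/-- The first-order kernel integrates to zero over the second forward variable. -/
theorem integratesToZero_G1 {ystar R1star : ℝ → ℝ}
    (hα : Continuous α) (hσ : Continuous σ) (hγc : Continuous γ)
    (hys : Continuous ystar) (hR1 : Continuous R1star) (htv : t ≤ v)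
    (hs : 0 < Srr α σ t v) (hD : 0 < Srr α σ t v * Szz α σ γ t v - Srz α σ γ t v ^ 2)
    (hγ : ∀ u ∈ Icc t v, 0 < γ u) (y z η : ℝ) :
    IntegratesToZero fun ζ => G1 α σ γ ystar R1star y z t η ζ v := by
  have hp : 0 < condPrec α σ γ t v := div_pos hs (by positivity)
  have hφ := continuous_phiR hα t
  have hS := continuous_Srr hα hσ t
  have hY := continuous_dY hα hσ hγc t
  have hZ := continuous_dZ hα hσ hγc t
  have hAmp : Continuous (condAmp α σ γ t v η) := (differentiable_condAmp η).continuous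
  have hShift : Continuous (condShift α σ γ t v η) := (differentiable_condShift η).continuous
  have hRp : ContinuousOn (Rplus α σ γ ystar y t) (Icc t v) :=
    ContinuousOn.div (by fun_prop) (by fun_prop) fun u hu => by linarith [hγ u hu]
  have hRm : ContinuousOn (Rminus α σ γ ystar y t) (Icc t v) :=
    ContinuousOn.div (by fun_prop) (by fun_prop) fun u hu => by linarith [hγ u hu]
  set p := condPrec α σ γ t v
  have hg : IntegratesToZero fun x => x * exp (-p * x ^ 2) :=
    ⟨integrable_mul_exp_neg_mul_sq hp, integral_id_mul_exp_neg_mul_sq hp⟩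
  have hg' : IntegratesToZero fun x => (1 - 2 * p * x ^ 2) * exp (-p * x ^ 2) :=
    ⟨integrable_one_sub_mul_exp_neg_mul_sq hp, integral_one_sub_mul_exp_neg_mul_sq hp⟩
  have hgc : Continuous fun x : ℝ => x * exp (-p * x ^ 2) := by fun_prop
  have hdz : ∀ y z, IntegratesToZero fun ζ => dzG0 α σ γ y z t η ζ v := fun y z => by
    simp only [dzG0_eq hs.ne' hD.ne']
    exact (hg.comp_sub_right _).const_mul _
  have hdzz : IntegratesToZero fun ζ => dzzG0 α σ γ y z t η ζ v := by
    simp only [dzzG0_eq hs.ne' hD.ne']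
    exact (hg'.comp_sub_right _).const_mul _
  have hdydz : IntegratesToZero fun ζ => dydzG0 α σ γ y z t η ζ v := by
    simp only [dydzG0_eq hs.ne' hD.ne']
    exact ((hg.comp_sub_right _).const_mul _).sub ((hg'.comp_sub_right _).const_mul _)
  have hsuper : ∀ R Y Z : ℝ → ℝ, ContinuousOn R (Icc t v) → Continuous Y → Continuous Z →
      (IntegratesToZero fun ζ => ∫ u in t..v, R u * dzG0 α σ γ (Y u) (Z u) t η ζ v) ∧
      ∀ ζ, IntervalIntegrable (fun u => R u * dzG0 α σ γ (Y u) (Z u) t η ζ v) volume t v := by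
    intro R Y Z hR hYc hZc
    have hA : ContinuousOn (fun u => R u * condAmp α σ γ t v η (Y u)) (Icc t v) :=
      hR.mul (hAmp.comp hYc).continuousOn
    have hm : Continuous fun u => Z u + condShift α σ γ t v η (Y u) := by fun_prop
    simp only [dzG0_eq hs.ne' hD.ne', ← mul_assoc (R _)]
    refine ⟨hg.superpose hgc htv hA hm.continuousOn, fun ζ => ?_⟩
    refine ContinuousOn.intervalIntegrable_of_Icc htv (hA.mul (Continuous.continuousOn ?_))
    fun_prop
  obtain ⟨hplus, hplusI⟩ := hsuper _ (fun u => y + dY α σ γ t u) (fun u => z + dZ α σ γ t u) hRp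
    (by fun_prop) (by fun_prop)
  obtain ⟨hminus, hminusI⟩ := hsuper _ (fun u => y - dY α σ γ t u) (fun u => z - dZ α σ γ t u) hRm
    (by fun_prop) (by fun_prop)
  obtain ⟨hconst, hconstI⟩ := hsuper R1star (fun _ => y) (fun _ => z) hR1.continuousOn
    continuous_const continuous_const
  have hint := (hplus.sub hminus).add hconst
  simp only [← intervalIntegral.integral_sub (hplusI _) (hminusI _),
    ← intervalIntegral.integral_add ((hplusI _).sub (hminusI _)) (hconstI _)] at hint
  exact ((hint.sub ((hdz y z).const_mul _)).sub
    ((hdydz.sub (hdzz.const_mul _)).const_mul _)).sub (hdzz.const_mul _)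

end Kernel

theorem first_order_kernel_kills_y_payoffs (α σ γ ystar R1star : ℝ → ℝ)
    (hα : Continuous α) (hσc : Continuous σ) (hγc : Continuous γ)
    (hys : Continuous ystar) (hR1 : Continuous R1star)
    (t v y z : ℝ) (htv : t < v)
    (hPD : (!![Srr α σ t v, Srz α σ γ t v;
               Srz α σ γ t v, Szz α σ γ t v]).PosDef)
    (hγ : ∀ u ∈ Set.Icc t v, 0 < γ u) :
    ∀ f : ℝ → ℝ, Continuous f → (∃ C : ℝ, ∀ x : ℝ, |f x| ≤ C) →
      (∫ η : ℝ, ∫ ζ : ℝ, f η * G1 α σ γ ystar R1star y z t η ζ v) = 0 := by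
  intro f _ _
  have hs : 0 < Srr α σ t v := by simpa using hPD.diag_pos (i := 0)
  have hD : 0 < Srr α σ t v * Szz α σ γ t v - Srz α σ γ t v ^ 2 := by
    have h := hPD.det_pos
    rw [Matrix.det_fin_two_of] at h
    linarith [h, sq (Srz α σ γ t v)]
  simp [integral_const_mul,
    (integratesToZero_G1 hα hσc hγc hys hR1 htv.le hs hD hγ y z _).2]
end

section
/- In the Hull–White case γ ≡ 0, if σ(u) > 0 for all u ∈ [t,v] and t < v, then the covariance matrix of the pair (short rate, compounded rate) is positive definite: S_rr(t,v) > 0, S_zz(t,v) > 0, and S_rr(t,v)·S_zz(t,v) − S_rz(t,v)² > 0. -/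
open MeasureTheory Real

/-- A primitive of a function that is positive on `(t, v]` is positive on `(t, v]`. -/
lemma integral_pos_on_Ioc {g : ℝ → ℝ} {t v : ℝ} (hg : Continuous g)
    (hpos : ∀ u ∈ Set.Ioc t v, 0 < g u) :
    ∀ x ∈ Set.Ioc t v, 0 < ∫ u in t..x, g u := fun x hx =>
  intervalIntegral.intervalIntegral_pos_of_pos_on (hg.intervalIntegrable t x)
    (fun u hu => hpos u ⟨hu.1, hu.2.le.trans hx.2⟩) hx.1

lemma continuous_integral_right {g : ℝ → ℝ} (hg : Continuous g) (t : ℝ) :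
    Continuous fun x => ∫ u in t..x, g u :=
  intervalIntegral.continuous_primitive (fun a b => hg.intervalIntegrable a b) t

/-- Determinant inequality for iterated primitives `A = ∫ a`, `C = ∫ e A`, `W = ∫ e C`: the
derivative of `2 A W - C²` is `2 a W`. -/
lemma sq_integral_lt_two_mul_integral_mul_integral {a e A C W : ℝ → ℝ} {t v : ℝ} (htv : t < v)
    (ha : Continuous a) (hW : Continuous W)
    (hA' : ∀ x, HasDerivAt A (a x) x) (hC' : ∀ x, HasDerivAt C (e x * A x) x)
    (hW' : ∀ x, HasDerivAt W (e x * C x) x) (hA0 : A t = 0) (hC0 : C t = 0)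
    (hapos : ∀ u ∈ Set.Ioc t v, 0 < a u) (hWpos : ∀ u ∈ Set.Ioc t v, 0 < W u) :
    C v ^ 2 < 2 * A v * W v := by
  have hD : ∀ x, HasDerivAt (fun y => 2 * A y * W y - C y ^ 2) (2 * a x * W x) x := fun x => by
    refine ((((hA' x).const_mul 2).mul (hW' x)).sub ((hC' x).pow 2)).congr_deriv ?_
    push_cast
    ring
  have hc : Continuous fun x => 2 * a x * W x := by fun_prop
  have hint := intervalIntegral.integral_eq_sub_of_hasDerivAt (fun x _ => hD x)
    (hc.intervalIntegrable t v)
  have hpos := integral_pos_on_Ioc hc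
    (fun u hu => mul_pos (mul_pos two_pos (hapos u hu)) (hWpos u hu)) v ⟨htv, le_rfl⟩
  rw [hint, hA0, hC0] at hpos
  linarith

lemma phiR_pos (α : ℝ → ℝ) (t v : ℝ) : 0 < phiR α t v := exp_pos _

lemma continuous_phiR_right {α : ℝ → ℝ} (hα : Continuous α) (t : ℝ) :
    Continuous fun x => phiR α t x :=
  (continuous_integral_right hα t).neg.rexp

lemma phiR_eq_div {α : ℝ → ℝ} (hα : Continuous α) (t u v : ℝ) :
    phiR α u v = phiR α t v / phiR α t u := by
  rw [phiR, phiR, phiR, ← Real.exp_sub, ← intervalIntegral.integral_add_adjacent_intervals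
    (hα.intervalIntegrable t u) (hα.intervalIntegrable u v)]
  congr 1
  ring

lemma Srr_eq {α : ℝ → ℝ} (hα : Continuous α) (σ : ℝ → ℝ) (t x : ℝ) :
    Srr α σ t x = phiR α t x ^ 2 * ∫ u in t..x, (σ u / phiR α t u) ^ 2 := by
  rw [Srr, ← intervalIntegral.integral_const_mul]
  refine intervalIntegral.integral_congr fun u _ => ?_
  simp only [phiR_eq_div hα t u x]
  ring

lemma psiR_zero (α σ : ℝ → ℝ) (t v : ℝ) : psiR α σ (fun _ => 0) t v = 1 := by
  simp [psiR]

lemma Srz_zero_eq {α : ℝ → ℝ} (hα : Continuous α) (σ : ℝ → ℝ) (t x : ℝ) :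
    Srz α σ (fun _ => 0) t x = phiR α t x *
      ∫ u in t..x, phiR α t u * ∫ s in t..u, (σ s / phiR α t s) ^ 2 := by
  rw [Srz, ← intervalIntegral.integral_const_mul]
  refine intervalIntegral.integral_congr fun u _ => ?_
  have := (phiR_pos α t u).ne'
  simp only [phiR_eq_div hα t u x, psiR_zero, Srr_eq hα σ t u]
  field_simp

lemma Szz_zero_eq {α : ℝ → ℝ} (hα : Continuous α) (σ : ℝ → ℝ) (t x : ℝ) :
    Szz α σ (fun _ => 0) t x = 2 * ∫ w in t..x, phiR α t w *
      ∫ u in t..w, phiR α t u * ∫ s in t..u, (σ s / phiR α t s) ^ 2 := by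
  simp only [Szz, psiR_zero, one_mul, Srz_zero_eq hα]

theorem HW_covariance_posdef (α σ : ℝ → ℝ)
    (hα : Continuous α) (hσc : Continuous σ)
    (t v : ℝ) (htv : t < v) (hσ : ∀ u ∈ Set.Icc t v, 0 < σ u) :
    0 < Srr α σ t v ∧ 0 < Szz α σ (fun _ => 0) t v ∧
      0 < Srr α σ t v * Szz α σ (fun _ => 0) t v - (Srz α σ (fun _ => 0) t v) ^ 2 := by
  rw [Srr_eq hα, Szz_zero_eq hα, Srz_zero_eq hα]
  have he := continuous_phiR_right hα t
  have hepos : ∀ u, 0 < phiR α t u := phiR_pos α t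
  have ha : Continuous fun u => (σ u / phiR α t u) ^ 2 :=
    (hσc.div he fun u => (hepos u).ne').pow 2
  have hapos : ∀ u ∈ Set.Ioc t v, 0 < (σ u / phiR α t u) ^ 2 := fun u hu =>
    pow_pos (div_pos (hσ u ⟨hu.1.le, hu.2⟩) (hepos u)) 2
  have heA := he.fun_mul (continuous_integral_right ha t)
  have hApos := integral_pos_on_Ioc ha hapos
  have hCpos := integral_pos_on_Ioc heA fun u hu => mul_pos (hepos u) (hApos u hu)
  have heC := he.fun_mul (continuous_integral_right heA t)
  have hWpos := integral_pos_on_Ioc heC fun u hu => mul_pos (hepos u) (hCpos u hu)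
  have hv : v ∈ Set.Ioc t v := ⟨htv, le_rfl⟩
  have hdet := sq_integral_lt_two_mul_integral_mul_integral htv ha
    (continuous_integral_right heC t) (fun x => ha.integral_hasStrictDerivAt t x |>.hasDerivAt)
    (fun x => heA.integral_hasStrictDerivAt t x |>.hasDerivAt)
    (fun x => heC.integral_hasStrictDerivAt t x |>.hasDerivAt)
    intervalIntegral.integral_same intervalIntegral.integral_same hapos hWpos
  refine ⟨mul_pos (pow_pos (hepos v) 2) (hApos v hv), mul_pos two_pos (hWpos v hv), ?_⟩
  refine (mul_pos (pow_pos (hepos v) 2) (sub_pos.2 hdet)).trans_eq ?_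
  ring
end
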